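/- arXiv:1703.05960 — 2 statements merged into one kernel-verified Lean document; each statement's English description precedes it below -/
import Mathlib

section
/- Let w be a double occurrence word on an n-element set V and let G = I(w) be its interlacement graph. Then: (a) the entrywise mod-2 reduction of the integer matrix IAS_w equals IAS(G); and (b) for every field F and every subtransversal S of W(G), the rank over F of the columns of the image in F of IAS_w indexed by S equals the rank over GF(2) of the columns of IAS(G) indexed by S. In particular, Z₃(G) is strictly representable over every field. -/
open Matrix

noncomputable section

/-- The rank over `F` of the set of columns of `M` indexed by `S`. -/
def colSpanRank (F : Type*) [Field F] {m n : Type*} (M : Matrix m n F) (S : Set n) : ℕ :=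
  Module.finrank F ↥(Submodule.span F ((fun j i => M i j) '' S))

/-- A subtransversal of `W(G) = V × {φ,χ,ψ}`: at most one element of each triple. -/
def Subtransversal3 {V : Type*} (S : Set (V × Fin 3)) : Prop :=
  ∀ v i j, (v, i) ∈ S → (v, j) ∈ S → i = j

/-- The matrix `IAS(G) = (I | A | I + A)` over GF(2); the columns `(v,0)`, `(v,1)`,
`(v,2)` are `φ_G(v)`, `χ_G(v)`, `ψ_G(v)` respectively. -/
def IASmat {V : Type*} [DecidableEq V] (A : Matrix V V (ZMod 2)) :
    Matrix V (V × Fin 3) (ZMod 2) :=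
  Matrix.of fun v p =>
    if p.2 = 0 then (if v = p.1 then 1 else 0)
    else if p.2 = 1 then A v p.1
    else (if v = p.1 then 1 else 0) + A v p.1

/-- `w` is a double occurrence word on `V`: each element of `V` occurs exactly twice. -/
def IsDOW {V : Type*} [DecidableEq V] (w : List V) : Prop := ∀ v : V, w.count v = 2

/-- Distinct `u` and `v` are interlaced in `w`: their occurrences appear in the order
`u v u v` or `v u v u`. -/
def Interlaced {V : Type*} (w : List V) (u v : V) : Prop :=
  [u, v, u, v].Sublist w ∨ [v, u, v, u].Sublist w

open Classical in
/-- The adjacency matrix over GF(2) of the interlacement graph `I(w)`. -/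
def interMat {V : Type*} [DecidableEq V] (w : List V) : Matrix V V (ZMod 2) :=
  Matrix.of fun u v => if u ≠ v ∧ Interlaced w u v then 1 else 0

/-- The position of the first occurrence `v⁻` of `v` in `w`. -/
def fstIdx {V : Type*} [DecidableEq V] (w : List V) (v : V) : ℕ :=
  w.findIdx (fun x => decide (x = v))

/-- The position of the second occurrence `v⁺` of `v` in `w`. -/
def sndIdx {V : Type*} [DecidableEq V] (w : List V) (v : V) : ℕ :=
  fstIdx w v + 1 + (w.drop (fstIdx w v + 1)).findIdx (fun x => decide (x = v))

/-- Position `k` lies in the interior of `v` in `w`, i.e. strictly between `v⁻` and `v⁺`. -/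
def inInterior {V : Type*} [DecidableEq V] (w : List V) (v : V) (k : ℕ) : Prop :=
  fstIdx w v < k ∧ k < sndIdx w v

instance {V : Type*} [DecidableEq V] (w : List V) (v : V) (k : ℕ) :
    Decidable (inInterior w v k) := by unfold inInterior; infer_instance

/-- The integer matrix `IAS_w = (I | A | B)` associated with a double occurrence word `w`;
the columns `(u,0)`, `(u,1)`, `(u,2)` are the `φ`, `χ`, `ψ` columns of `u`. -/
def IASword {V : Type*} [DecidableEq V] (w : List V) : Matrix V (V × Fin 3) ℤ :=
  Matrix.of fun v p =>
    if p.2 = 0 then (if v = p.1 then 1 else 0)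
    else if p.2 = 1 then
      (if v = p.1 then 0 else
        (if inInterior w v (sndIdx w p.1) then 1 else 0)
          - (if inInterior w v (fstIdx w p.1) then 1 else 0))
    else
      (if v = p.1 then 1 else
        (if inInterior w v (fstIdx w p.1) then 1 else 0)
          + (if inInterior w v (sndIdx w p.1) then 1 else 0))

/-!
A row vector `y` over `F` gives a flow on the walk spelled by `w`: add up `y v` times the indicator
of the closed subwalk from `v⁻` to `v⁺`. These flows are exactly the circulations of the 4-regular
graph traced by the walk. Orthogonality of `y` to the `φ`, `χ` or `ψ` column of `v` says that
Kirchhoff's law survives splitting `v` in two according to the corresponding transition. Hence, for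
a subtransversal `S`, the vectors orthogonal to the columns in `S` form the circulation space of a
directed graph, of dimension `edges - vertices + components`, which is the same over every field.
Since `IAS_w` reduces to `IAS(G)` modulo 2, comparing `F` with `GF(2)` gives the theorem.
-/

section LinearAlgebra

variable {F : Type*} [Field F] {m n : Type*}

lemma colSpanRank_submatrix_rows {m' : Type*} (M : Matrix m n F) (e : m' ≃ m) (S : Set n) :
    colSpanRank F (M.submatrix e id) S = colSpanRank F M S := by
  let reindex : (m → F) ≃ₗ[F] (m' → F) := LinearEquiv.funCongrLeft F F e
  rw [colSpanRank, colSpanRank, ← reindex.finrank_map_eq, Submodule.map_span, Set.image_image]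
  rfl

variable [Fintype m]

lemma rank_add_finrank_ker_vecMulLinear [Fintype n] (M : Matrix m n F) :
    M.rank + Module.finrank F M.vecMulLinear.ker = Fintype.card m := by
  rw [← Matrix.rank_transpose, Matrix.rank, Matrix.mulVecLin_transpose,
    LinearMap.finrank_range_add_finrank_ker, Module.finrank_fintype_fun_eq_card]

/-- The row vectors orthogonal to all columns of `M` indexed by `S`. -/
def leftKernel (M : Matrix m n F) (S : Set n) : Submodule F (m → F) :=
  (M.submatrix id ((↑) : S → n)).vecMulLinear.ker

lemma mem_leftKernel {M : Matrix m n F} {S : Set n} {y : m → F} :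
    y ∈ leftKernel M S ↔ ∀ j ∈ S, (y ᵥ* M) j = 0 := by
  simp [leftKernel, funext_iff, Matrix.vecMul]

lemma colSpanRank_add_finrank_leftKernel [Finite n] (M : Matrix m n F) (S : Set n) :
    colSpanRank F M S + Module.finrank F (leftKernel M S) = Fintype.card m := by
  have : Fintype S := Fintype.ofFinite S
  rw [leftKernel, ← rank_add_finrank_ker_vecMulLinear (M.submatrix id ((↑) : S → n)),
    Matrix.rank_eq_finrank_span_cols, colSpanRank, Set.image_eq_range]
  rfl

end LinearAlgebra

section SignedIncidence

variable {E X : Type*} [DecidableEq X]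

/-- The vertex-edge incidence matrix of the directed multigraph in which the edge `e` runs
from `tail e` to `head e`; its entry is `1` at the tail and `-1` at the head, and `0` for loops.
Its kernel is the space of circulations. -/
def signedIncidence (R : Type*) [Ring R] (tail head : E → X) : Matrix X E R :=
  Matrix.of fun x e => (if tail e = x then 1 else 0) - (if head e = x then 1 else 0)

lemma signedIncidence_mulVec {R : Type*} [Ring R] [Fintype E] (tail head : E → X) (f : E → R)
    (x : X) :
    (signedIncidence R tail head *ᵥ f) x =
      (∑ e, if tail e = x then f e else 0) - ∑ e, if head e = x then f e else 0 := by
  simp [signedIncidence, Matrix.mulVec, dotProduct, sub_mul]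

lemma vecMul_signedIncidence {R : Type*} [Ring R] [Fintype X] (tail head : E → X) (f : X → R)
    (e : E) : (f ᵥ* signedIncidence R tail head) e = f (tail e) - f (head e) := by
  simp [signedIncidence, Matrix.vecMul, dotProduct, mul_sub]

variable (F : Type*) [Field F] [Fintype X] (tail head : E → X)

lemma ker_vecMulLinear_signedIncidence :
    (signedIncidence F tail head).vecMulLinear.ker =
      (LinearMap.funLeft F F (Function.Coequalizer.mk tail head)).range := by
  ext f
  simp only [LinearMap.mem_ker, Matrix.vecMulLinear_apply, LinearMap.mem_range, funext_iff,
    vecMul_signedIncidence, Pi.zero_apply, sub_eq_zero]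
  constructor
  · intro hf
    exact ⟨Function.Coequalizer.desc tail head f (funext hf), fun _ => rfl⟩
  · rintro ⟨g, hg⟩ e
    rw [← hg, ← hg]
    exact congrArg g (Function.Coequalizer.condition tail head e)

lemma rank_signedIncidence_add_card_components [Fintype E] :
    (signedIncidence F tail head).rank + Nat.card (Function.Coequalizer tail head) =
      Fintype.card X := by
  have hmk := Function.Coequalizer.mk_surjective tail head
  have : Finite (Function.Coequalizer tail head) := Finite.of_surjective _ hmk
  have : Fintype (Function.Coequalizer tail head) := Fintype.ofFinite _
  rw [← rank_add_finrank_ker_vecMulLinear (signedIncidence F tail head),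
    ker_vecMulLinear_signedIncidence,
    LinearMap.finrank_range_of_inj (LinearMap.funLeft_injective_of_surjective F F _ hmk),
    Module.finrank_fintype_fun_eq_card, Nat.card_eq_fintype_card]

lemma finrank_circulations_add_card [Fintype E] :
    Module.finrank F (signedIncidence F tail head).mulVecLin.ker + Fintype.card X =
      Fintype.card E + Nat.card (Function.Coequalizer tail head) := by
  have hrank := (signedIncidence F tail head).mulVecLin.finrank_range_add_finrank_ker
  rw [Module.finrank_fintype_fun_eq_card] at hrank
  rw [← rank_signedIncidence_add_card_components F tail head, ← hrank, Matrix.rank]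
  ring

end SignedIncidence

section Occurrences

variable {V : Type*} {w : List V}

lemma getElem?_append_cons_eq_some_iff {v : V} {l₁ : List V} (h₁ : v ∉ l₁) (l₂ : List V) (k : ℕ) :
    (l₁ ++ v :: l₂)[k]? = some v ↔
      k = l₁.length ∨ l₁.length < k ∧ l₂[k - (l₁.length + 1)]? = some v := by
  rcases lt_trichotomy k l₁.length with hk | rfl | hk
  · have := List.getElem?_append_left (l₂ := v :: l₂) hk
    grind
  · simp
  · obtain ⟨j, rfl⟩ := Nat.exists_eq_add_of_lt hk
    grind

variable [DecidableEq V]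

lemma findIdx_append_cons_self {v : V} {l₁ : List V} (h₁ : v ∉ l₁) (l₂ : List V) :
    (l₁ ++ v :: l₂).findIdx (fun x => decide (x = v)) = l₁.length := by
  have hlen : l₁.findIdx (fun x => decide (x = v)) = l₁.length :=
    List.findIdx_eq_length_of_false fun x hx => decide_eq_false (ne_of_mem_of_not_mem hx h₁)
  simp [List.findIdx_append, List.findIdx_cons, hlen]

lemma fstIdx_lt_sndIdx (w : List V) (v : V) : fstIdx w v < sndIdx w v := by
  unfold sndIdx
  omega

/-- The position in `w` of the occurrence `(v, false) = v⁻` or `(v, true) = v⁺` of a letter. -/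
def occIdx (w : List V) (p : V × Bool) : ℕ := if p.2 then sndIdx w p.1 else fstIdx w p.1

namespace IsDOW

lemma getElem?_eq_some_iff (hw : IsDOW w) (v : V) (k : ℕ) :
    w[k]? = some v ↔ k = fstIdx w v ∨ k = sndIdx w v := by
  have hv : w.count v = 2 := hw v
  obtain ⟨l₁, l, rfl, h₁⟩ :=
    List.eq_append_cons_of_mem (List.count_pos_iff.1 (hv.symm ▸ Nat.two_pos))
  have hl : l.count v = 1 := by simpa [List.count_eq_zero_of_not_mem h₁] using hv
  obtain ⟨l₂, l₃, rfl, h₂⟩ :=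
    List.eq_append_cons_of_mem (List.count_pos_iff.1 (hl.symm ▸ Nat.one_pos))
  have h₃ : v ∉ l₃ := List.count_eq_zero.1 (by simpa [List.count_eq_zero_of_not_mem h₂] using hl)
  have hfst : fstIdx (l₁ ++ v :: (l₂ ++ v :: l₃)) v = l₁.length := findIdx_append_cons_self h₁ _
  have hsnd : sndIdx (l₁ ++ v :: (l₂ ++ v :: l₃)) v = l₁.length + 1 + l₂.length := by
    have hdrop : (l₁ ++ v :: (l₂ ++ v :: l₃)).drop (l₁.length + 1) = l₂ ++ v :: l₃ := by
      rw [List.drop_length_add_append, List.drop_one, List.tail_cons]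
    rw [sndIdx, hfst, hdrop, findIdx_append_cons_self h₂]
  have hl₃ (j : ℕ) : l₃[j]? ≠ some v := fun h => h₃ (List.mem_of_getElem? h)
  rw [getElem?_append_cons_eq_some_iff h₁, getElem?_append_cons_eq_some_iff h₂, hfst, hsnd]
  simp only [hl₃, and_false, or_false]
  omega

lemma getElem?_occIdx (hw : IsDOW w) (p : V × Bool) : w[occIdx w p]? = some p.1 :=
  (hw.getElem?_eq_some_iff p.1 _).2 (by unfold occIdx; split_ifs <;> simp)

lemma occIdx_lt_length (hw : IsDOW w) (p : V × Bool) : occIdx w p < w.length :=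
  (List.getElem?_eq_some_iff.1 (hw.getElem?_occIdx p)).1

lemma occIdx_injective (hw : IsDOW w) : Function.Injective (occIdx w) := by
  rintro ⟨u, b⟩ ⟨v, c⟩ h
  obtain rfl : u = v := Option.some_injective _ <| by
    rw [← hw.getElem?_occIdx (u, b), h, hw.getElem?_occIdx]
  have := fstIdx_lt_sndIdx w u
  cases b <;> cases c <;> simp_all [occIdx]

lemma exists_occIdx_eq (hw : IsDOW w) (k : Fin w.length) : ∃ p, occIdx w p = k := by
  rcases (hw.getElem?_eq_some_iff w[k] k).1 (List.getElem?_eq_getElem k.isLt) with h | h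
  · exact ⟨(w[k], false), h.symm⟩
  · exact ⟨(w[k], true), h.symm⟩

/-- The bijection from the occurrences `v⁻ = (v, false)` and `v⁺ = (v, true)` of the letters onto
the positions of a double occurrence word. -/
def occ (hw : IsDOW w) : V × Bool ≃ Fin w.length :=
  Equiv.ofBijective (fun p => ⟨occIdx w p, hw.occIdx_lt_length p⟩)
    ⟨fun _ _ h => hw.occIdx_injective (congrArg Fin.val h),
      fun k => (hw.exists_occIdx_eq k).imp fun _ h => Fin.ext h⟩

lemma val_occ_false (hw : IsDOW w) (v : V) : (hw.occ (v, false) : ℕ) = fstIdx w v := rfl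

lemma val_occ_true (hw : IsDOW w) (v : V) : (hw.occ (v, true) : ℕ) = sndIdx w v := rfl

lemma getElem_occ (hw : IsDOW w) (p : V × Bool) : w[(hw.occ p : ℕ)] = p.1 :=
  (List.getElem?_eq_some_iff.1 (hw.getElem?_occIdx p)).2

lemma idx_ne_idx (hw : IsDOW w) {u v : V} (huv : u ≠ v) :
    fstIdx w u ≠ fstIdx w v ∧ fstIdx w u ≠ sndIdx w v ∧
      sndIdx w u ≠ fstIdx w v ∧ sndIdx w u ≠ sndIdx w v := by
  have hne (b c : Bool) : occIdx w (u, b) ≠ occIdx w (v, c) :=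
    hw.occIdx_injective.ne fun h => huv (congrArg Prod.fst h)
  exact ⟨hne false false, hne false true, hne true false, hne true true⟩

lemma alternating_sublist_iff (hw : IsDOW w) (u v : V) :
    [u, v, u, v].Sublist w ↔
      fstIdx w u < fstIdx w v ∧ fstIdx w v < sndIdx w u ∧ sndIdx w u < sndIdx w v := by
  have hu := fstIdx_lt_sndIdx w u
  have hv := fstIdx_lt_sndIdx w v
  constructor
  · intro h
    obtain ⟨f, hf⟩ := List.sublist_iff_exists_orderEmbedding_getElem?_eq.1 h
    have h01 : f 0 < f 1 := f.lt_iff_lt.2 (by norm_num)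
    have h12 : f 1 < f 2 := f.lt_iff_lt.2 (by norm_num)
    have h23 : f 2 < f 3 := f.lt_iff_lt.2 (by norm_num)
    have hf0 := (hw.getElem?_eq_some_iff u (f 0)).1 (hf 0).symm
    have hf1 := (hw.getElem?_eq_some_iff v (f 1)).1 (hf 1).symm
    have hf2 := (hw.getElem?_eq_some_iff u (f 2)).1 (hf 2).symm
    have hf3 := (hw.getElem?_eq_some_iff v (f 3)).1 (hf 3).symm
    omega
  · rintro ⟨h01, h12, h23⟩
    have hpos : [hw.occ (u, false), hw.occ (v, false), hw.occ (u, true), hw.occ (v, true)].Pairwise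
        (· < ·) := List.isChain_iff_pairwise.1 (by simpa using ⟨h01, h12, h23⟩)
    simpa [getElem_occ] using List.map_getElem_sublist hpos

lemma interlaced_iff (hw : IsDOW w) {u v : V} (huv : u ≠ v) :
    Interlaced w u v ↔ ¬(inInterior w u (fstIdx w v) ↔ inInterior w u (sndIdx w v)) := by
  have hu := fstIdx_lt_sndIdx w u
  have hv := fstIdx_lt_sndIdx w v
  obtain ⟨hff, hfs, hsf, hss⟩ := hw.idx_ne_idx huv
  rw [Interlaced, hw.alternating_sublist_iff, hw.alternating_sublist_iff, inInterior, inInterior]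
  omega

theorem IASword_map_intCast_zmod_two (hw : IsDOW w) :
    (IASword w).map (Int.cast : ℤ → ZMod 2) = IASmat (interMat w) := by
  have two_eq_zero : (2 : ZMod 2) = 0 := rfl
  ext u ⟨v, i⟩
  by_cases huv : u = v
  · subst huv
    fin_cases i <;> simp [IASword, IASmat, interMat]
  · by_cases hfst : inInterior w u (fstIdx w v) <;> by_cases hsnd : inInterior w u (sndIdx w v) <;>
      fin_cases i <;>
      simp [IASword, IASmat, interMat, huv, hw.interlaced_iff huv, hfst, hsnd, one_add_one_eq_two,
        two_eq_zero]

end IsDOW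

end Occurrences

section Flows

variable {V : Type*} [DecidableEq V] {w : List V}

/-- The edges of the walk spelled by `w` are numbered so that edge `e` enters position `e` and
leaves position `e - 1`. Row `v` is the indicator of the closed subwalk from `v⁻` to `v⁺`. -/
def loopMatrix (R : Type*) [Zero R] [One R] (w : List V) : Matrix V (Fin (w.length + 1)) R :=
  Matrix.of fun v e => if fstIdx w v < e ∧ (e : ℕ) ≤ sndIdx w v then 1 else 0

namespace IsDOW

/-- The edge of the walk spelled by `w` that arrives at a given occurrence. -/
def inEdge (hw : IsDOW w) (p : V × Bool) : Fin (w.length + 1) := (hw.occ p).castSucc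

/-- The edge of the walk spelled by `w` that departs from a given occurrence. -/
def outEdge (hw : IsDOW w) (p : V × Bool) : Fin (w.length + 1) := (hw.occ p).succ

lemma finite (hw : IsDOW w) : Finite V :=
  Finite.of_injective (fun v => hw.occ (v, false)) fun _ _ h => by simpa using h

lemma sum_edges_eq_add_sum_outEdge [Fintype V] (hw : IsDOW w) {M : Type*} [AddCommMonoid M]
    (f : Fin (w.length + 1) → M) : ∑ e, f e = f 0 + ∑ p, f (hw.outEdge p) := by
  rw [Fin.sum_univ_succ, ← hw.occ.sum_comp]
  rfl

lemma sum_edges_eq_sum_inEdge_add [Fintype V] (hw : IsDOW w) {M : Type*} [AddCommMonoid M]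
    (f : Fin (w.length + 1) → M) : ∑ e, f e = ∑ p, f (hw.inEdge p) + f (Fin.last _) := by
  rw [Fin.sum_univ_castSucc, ← hw.occ.sum_comp]
  rfl

lemma length_eq [Fintype V] (hw : IsDOW w) : w.length = 2 * Fintype.card V := by
  simpa [mul_comm] using (Fintype.card_congr hw.occ).symm

lemma edge_induction (hw : IsDOW w) {P : Fin (w.length + 1) → Prop} (zero : P 0)
    (step : ∀ p, P (hw.inEdge p) → P (hw.outEdge p)) (e : Fin (w.length + 1)) : P e :=
  Fin.induction zero (fun k hk => by simpa [outEdge] using step (hw.occ.symm k) (by simpa [inEdge]))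
    e

section Ring

variable {R : Type*} [Ring R]

lemma loopMatrix_outEdge (hw : IsDOW w) (u v : V) (b : Bool) :
    loopMatrix R w u (hw.outEdge (v, b)) =
      loopMatrix R w u (hw.inEdge (v, b)) + if u = v then (bif b then -1 else 1) else 0 := by
  have hu := fstIdx_lt_sndIdx w u
  by_cases huv : u = v
  · subst huv
    cases b <;> simp [loopMatrix, outEdge, inEdge, val_occ_false, val_occ_true, hu]
  · obtain ⟨hff, hfs, hsf, hss⟩ := hw.idx_ne_idx huv
    have hstep : (fstIdx w u < hw.outEdge (v, b) ∧ (hw.outEdge (v, b) : ℕ) ≤ sndIdx w u) ↔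
        fstIdx w u < hw.inEdge (v, b) ∧ (hw.inEdge (v, b) : ℕ) ≤ sndIdx w u := by
      cases b <;> simp only [outEdge, inEdge, Fin.val_succ, Fin.val_castSucc, val_occ_false,
        val_occ_true] <;> omega
    simp only [loopMatrix, Matrix.of_apply, hstep, huv, if_false, add_zero]

/-- The amount by which a circulation `f` violates Kirchhoff's law at a half of the letter `v` when
`v` is split according to the transition `φ`, `χ` or `ψ`. The transitions pair the edge arriving at
`v⁻` with, respectively, the edge leaving `v⁻`, the edge leaving `v⁺` and the edge arriving
at `v⁺`. -/
def transitionDefect (hw : IsDOW w) (f : Fin (w.length + 1) → R) (v : V) : Fin 3 → R :=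
  ![f (hw.outEdge (v, false)) - f (hw.inEdge (v, false)),
    f (hw.outEdge (v, true)) - f (hw.inEdge (v, false)),
    f (hw.inEdge (v, false)) + f (hw.inEdge (v, true))]

lemma IASword_map_intCast_apply (hw : IsDOW w) (u v : V) (i : Fin 3) :
    (IASword w).map (Int.cast : ℤ → R) u (v, i) =
      hw.transitionDefect (loopMatrix R w u) v i := by
  have hu := fstIdx_lt_sndIdx w u
  simp only [transitionDefect, hw.loopMatrix_outEdge]
  by_cases huv : u = v
  · subst huv
    fin_cases i <;>
      simp [IASword, loopMatrix, inEdge, val_occ_false, val_occ_true, hu]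
  · obtain ⟨-, -, hsf, hss⟩ := hw.idx_ne_idx huv
    have hfst : loopMatrix R w u (hw.inEdge (v, false)) =
        if inInterior w u (fstIdx w v) then 1 else 0 :=
      if_congr (and_congr_right' (Ne.symm hsf).le_iff_lt) rfl rfl
    have hsnd : loopMatrix R w u (hw.inEdge (v, true)) =
        if inInterior w u (sndIdx w v) then 1 else 0 :=
      if_congr (and_congr_right' (Ne.symm hss).le_iff_lt) rfl rfl
    fin_cases i <;> simp [IASword, huv, hfst, hsnd]

variable [Fintype V]

lemma vecMul_IASword_map_intCast_apply (hw : IsDOW w) (y : V → R) (v : V) (i : Fin 3) :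
    (y ᵥ* (IASword w).map (Int.cast : ℤ → R)) (v, i) =
      hw.transitionDefect (y ᵥ* loopMatrix R w) v i := by
  simp only [Matrix.vecMul, dotProduct, hw.IASword_map_intCast_apply]
  fin_cases i <;>
    simp [transitionDefect, Matrix.vecMul, dotProduct, mul_sub, mul_add, Finset.sum_add_distrib]

lemma vecMul_loopMatrix_outEdge (hw : IsDOW w) (y : V → R) (v : V) (b : Bool) :
    (y ᵥ* loopMatrix R w) (hw.outEdge (v, b)) =
      (y ᵥ* loopMatrix R w) (hw.inEdge (v, b)) + bif b then -y v else y v := by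
  cases b <;>
    simp [Matrix.vecMul, dotProduct, hw.loopMatrix_outEdge, mul_add, Finset.sum_add_distrib]

lemma vecMul_loopMatrix_injective (hw : IsDOW w) :
    Function.Injective fun y : V → R => y ᵥ* loopMatrix R w := by
  intro y z (h : y ᵥ* loopMatrix R w = z ᵥ* loopMatrix R w)
  ext v
  have hy := hw.vecMul_loopMatrix_outEdge y v false
  rw [h, hw.vecMul_loopMatrix_outEdge z v false] at hy
  exact (add_left_cancel hy).symm

/-- Kirchhoff's law for a flow on the walk spelled by `w`, whose vertices are the letters of `w`
and the two ends of the walk. -/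
def IsCirculation (hw : IsDOW w) (f : Fin (w.length + 1) → R) : Prop :=
  f 0 = 0 ∧ f (Fin.last _) = 0 ∧ ∀ v,
    f (hw.outEdge (v, false)) + f (hw.outEdge (v, true)) =
      f (hw.inEdge (v, false)) + f (hw.inEdge (v, true))

lemma isCirculation_vecMul_loopMatrix (hw : IsDOW w) (y : V → R) :
    hw.IsCirculation (y ᵥ* loopMatrix R w) := by
  have hlast (v : V) : sndIdx w v < w.length := hw.occIdx_lt_length (v, true)
  refine ⟨by simp [Matrix.vecMul, dotProduct, loopMatrix],
    by simp [Matrix.vecMul, dotProduct, loopMatrix, (hlast _).not_ge], fun v => ?_⟩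
  rw [hw.vecMul_loopMatrix_outEdge, hw.vecMul_loopMatrix_outEdge, cond_false, cond_true]
  abel

lemma isCirculation_iff_exists_vecMul_loopMatrix (hw : IsDOW w) (f : Fin (w.length + 1) → R) :
    hw.IsCirculation f ↔ ∃ y : V → R, y ᵥ* loopMatrix R w = f := by
  refine ⟨fun ⟨hzero, _, hbal⟩ => ?_, fun ⟨y, hy⟩ => hy ▸ hw.isCirculation_vecMul_loopMatrix y⟩
  let y (v : V) : R := f (hw.outEdge (v, false)) - f (hw.inEdge (v, false))
  refine ⟨y, funext (hw.edge_induction ?_ ?_)⟩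
  · rw [hzero, (hw.isCirculation_vecMul_loopMatrix y).1]
  · rintro ⟨v, _ | _⟩ ih
    · rw [hw.vecMul_loopMatrix_outEdge, ih, cond_false, add_sub_cancel]
    · rw [hw.vecMul_loopMatrix_outEdge, ih, cond_true, neg_sub, eq_sub_of_add_eq' (hbal v)]
      abel

end Ring

end IsDOW

end Flows

section Splitting

variable {V : Type*} [DecidableEq V] {w : List V}

/-- The half of a split letter to which a half-edge is attached, as a function of the transition
at the letter (`none` if the letter is left whole, in which case it is represented by its half
`false`), of the occurrence (`true` for the second) and of the direction (`true` for departing). -/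
def splitSide : Option (Fin 3) → Bool → Bool → Bool
  | none, _, _ => false
  | some 0, second, _ => second
  | some 1, second, departing => xor second departing
  | some 2, _, departing => departing

namespace IsDOW

/-- The initial vertex of an edge of the walk spelled by `w` once each letter `v` has been split
according to the transition `τ v`; the two ends of the walk are `Sum.inr false` and
`Sum.inr true`. -/
def splitTail (hw : IsDOW w) (τ : V → Option (Fin 3)) : Fin (w.length + 1) → (V × Bool) ⊕ Bool :=
  Fin.cases (Sum.inr false) fun k =>
    Sum.inl ((hw.occ.symm k).1, splitSide (τ (hw.occ.symm k).1) (hw.occ.symm k).2 true)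

/-- The terminal vertex of an edge of the split walk; see `IsDOW.splitTail`. -/
def splitHead (hw : IsDOW w) (τ : V → Option (Fin 3)) : Fin (w.length + 1) → (V × Bool) ⊕ Bool :=
  Fin.lastCases (Sum.inr true) fun k =>
    Sum.inl ((hw.occ.symm k).1, splitSide (τ (hw.occ.symm k).1) (hw.occ.symm k).2 false)

lemma splitTail_zero (hw : IsDOW w) (τ : V → Option (Fin 3)) :
    hw.splitTail τ 0 = Sum.inr false := rfl

lemma splitTail_outEdge (hw : IsDOW w) (τ : V → Option (Fin 3)) (p : V × Bool) :
    hw.splitTail τ (hw.outEdge p) = Sum.inl (p.1, splitSide (τ p.1) p.2 true) := by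
  simp [splitTail, outEdge]

lemma splitHead_last (hw : IsDOW w) (τ : V → Option (Fin 3)) :
    hw.splitHead τ (Fin.last _) = Sum.inr true := by
  simp [splitHead]

lemma splitHead_inEdge (hw : IsDOW w) (τ : V → Option (Fin 3)) (p : V × Bool) :
    hw.splitHead τ (hw.inEdge p) = Sum.inl (p.1, splitSide (τ p.1) p.2 false) := by
  simp [splitHead, inEdge]

variable {F : Type*} [Field F]

lemma mem_ker_signedIncidence_split_iff (hw : IsDOW w) (τ : V → Option (Fin 3))
    (f : Fin (w.length + 1) → F) :
    f ∈ (signedIncidence F (hw.splitTail τ) (hw.splitHead τ)).mulVecLin.ker ↔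
      f 0 = 0 ∧ f (Fin.last _) = 0 ∧ ∀ v side,
        (∑ b, if splitSide (τ v) b true = side then f (hw.outEdge (v, b)) else 0) =
          ∑ b, if splitSide (τ v) b false = side then f (hw.inEdge (v, b)) else 0 := by
  have := hw.finite
  have := Fintype.ofFinite V
  simp only [LinearMap.mem_ker, Matrix.mulVecLin_apply, funext_iff, signedIncidence_mulVec,
    Pi.zero_apply, sub_eq_zero]
  simp only [hw.sum_edges_eq_add_sum_outEdge fun e => ite (hw.splitTail τ e = _) (f e) 0,
    hw.sum_edges_eq_sum_inEdge_add fun e => ite (hw.splitHead τ e = _) (f e) 0,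
    splitTail_zero, splitTail_outEdge, splitHead_last, splitHead_inEdge, Fintype.sum_prod_type]
  simp only [Sum.forall, Prod.forall, Bool.forall_bool, reduceCtorEq, Sum.inl.injEq, Sum.inr.injEq,
    Prod.mk.injEq, ite_and, Finset.sum_add_distrib, Fintype.sum_bool, if_true, if_false,
    Finset.sum_ite_eq', Finset.mem_univ, Finset.sum_const_zero, add_zero, zero_add, forall_and]
  grind

lemma splitSide_balanced_iff (hw : IsDOW w) (t : Option (Fin 3)) (f : Fin (w.length + 1) → F)
    (v : V) :
    (∀ side, (∑ b, if splitSide t b true = side then f (hw.outEdge (v, b)) else 0) =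
        ∑ b, if splitSide t b false = side then f (hw.inEdge (v, b)) else 0) ↔
      f (hw.outEdge (v, false)) + f (hw.outEdge (v, true)) =
          f (hw.inEdge (v, false)) + f (hw.inEdge (v, true)) ∧
        ∀ i, t = some i → hw.transitionDefect f v i = 0 := by
  rcases t with _ | i
  · simp [splitSide, add_comm]
  · fin_cases i <;> simp [splitSide, transitionDefect] <;> grind

lemma mem_ker_signedIncidence_split_iff_isCirculation (hw : IsDOW w) (τ : V → Option (Fin 3))
    (f : Fin (w.length + 1) → F) :
    f ∈ (signedIncidence F (hw.splitTail τ) (hw.splitHead τ)).mulVecLin.ker ↔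
      hw.IsCirculation f ∧ ∀ v i, τ v = some i → hw.transitionDefect f v i = 0 := by
  simp only [mem_ker_signedIncidence_split_iff, splitSide_balanced_iff, forall_and, IsCirculation,
    and_assoc]

lemma ker_signedIncidence_split_eq_map [Fintype V] (hw : IsDOW w) (τ : V → Option (Fin 3)) :
    (signedIncidence F (hw.splitTail τ) (hw.splitHead τ)).mulVecLin.ker =
      (leftKernel ((IASword w).map (Int.cast : ℤ → F)) {p | τ p.1 = some p.2}).map
        (loopMatrix F w).vecMulLinear := by
  have hker (y : V → F) :
      y ∈ leftKernel ((IASword w).map (Int.cast : ℤ → F)) {p | τ p.1 = some p.2} ↔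
        ∀ v i, τ v = some i → hw.transitionDefect (y ᵥ* loopMatrix F w) v i = 0 := by
    simp [mem_leftKernel, hw.vecMul_IASword_map_intCast_apply]
  ext f
  simp only [hw.mem_ker_signedIncidence_split_iff_isCirculation, Submodule.mem_map, hker,
    hw.isCirculation_iff_exists_vecMul_loopMatrix, Matrix.vecMulLinear_apply]
  grind

/-- A form of the circuit-nullity formula: if `τ` is nowhere `none`, the components on the left are
the circuits of the corresponding circuit partition. -/
theorem colSpanRank_IASword_add_card_components [Fintype V] (hw : IsDOW w)
    (τ : V → Option (Fin 3)) :
    colSpanRank F ((IASword w).map (Int.cast : ℤ → F)) {p | τ p.1 = some p.2} +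
      Nat.card (Function.Coequalizer (hw.splitTail τ) (hw.splitHead τ)) =
        Fintype.card V + 1 := by
  have hrank := colSpanRank_add_finrank_leftKernel ((IASword w).map (Int.cast : ℤ → F))
    {p | τ p.1 = some p.2}
  have hcirc := finrank_circulations_add_card F (hw.splitTail τ) (hw.splitHead τ)
  rw [hw.ker_signedIncidence_split_eq_map,
    ← (Submodule.equivMapOfInjective _ hw.vecMul_loopMatrix_injective _).finrank_eq] at hcirc
  simp only [Fintype.card_sum, Fintype.card_prod, Fintype.card_bool, Fintype.card_fin,
    hw.length_eq] at hcirc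
  omega

end IsDOW

end Splitting

section Representation

variable {V : Type*}

lemma Subtransversal3.exists_eq_setOf {S : Set (V × Fin 3)} (hS : Subtransversal3 S) :
    ∃ τ : V → Option (Fin 3), S = {p | τ p.1 = some p.2} := by
  classical
  refine ⟨fun v => if h : ∃ i, (v, i) ∈ S then some h.choose else none, ?_⟩
  ext ⟨v, i⟩
  by_cases h : ∃ i, (v, i) ∈ S
  · simp only [Set.mem_ofPred_eq, h, dif_pos, Option.some.injEq]
    exact ⟨hS v _ _ h.choose_spec, fun hi => hi ▸ h.choose_spec⟩
  · simp_all

variable [DecidableEq V]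

theorem IsDOW.colSpanRank_IASword_eq {w : List V} (hw : IsDOW w) (F : Type*) [Field F]
    {S : Set (V × Fin 3)} (hS : Subtransversal3 S) :
    colSpanRank F ((IASword w).map (Int.cast : ℤ → F)) S =
      colSpanRank (ZMod 2) (IASmat (interMat w)) S := by
  have := hw.finite
  have := Fintype.ofFinite V
  obtain ⟨τ, rfl⟩ := hS.exists_eq_setOf
  have hF := hw.colSpanRank_IASword_add_card_components (F := F) τ
  have htwo := hw.colSpanRank_IASword_add_card_components (F := ZMod 2) τ
  rw [hw.IASword_map_intCast_zmod_two] at htwo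
  omega

lemma rank_IASword_map_intCast [Fintype V] (F : Type*) [Field F] (w : List V) :
    ((IASword w).map (Int.cast : ℤ → F)).rank = Fintype.card V := by
  refine le_antisymm (Matrix.rank_le_card_height _) ?_
  have hid : ((IASword w).map (Int.cast : ℤ → F)).submatrix id (fun v => (v, (0 : Fin 3))) = 1 := by
    ext u v
    simp [IASword, Matrix.one_apply]
  rw [← Matrix.rank_one (R := F) (n := V), ← hid]
  exact Matrix.rank_submatrix_le _ _ _

end Representation

/-- For a double occurrence word `w` with interlacement graph `G = I(w)`:
(a) the entrywise mod-2 reduction of the integer matrix `IAS_w` equals `IAS(G)`;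
(b) for every field `F` and every subtransversal `S`, the rank over `F` of the
columns of `IAS_w` (mapped into `F`) indexed by `S` equals the rank over GF(2) of
the corresponding columns of `IAS(G)`.  In particular `Z₃(G)` is strictly
representable over every field. -/
theorem IASword_strictly_represents
    {V : Type} [Fintype V] [DecidableEq V] (w : List V) (hw : IsDOW w) :
    ((IASword w).map (Int.cast : ℤ → ZMod 2) = IASmat (interMat w)) ∧
    (∀ (F : Type) [Field F], ∀ S : Set (V × Fin 3), Subtransversal3 S →
      colSpanRank F ((IASword w).map (Int.cast : ℤ → F)) S
        = colSpanRank (ZMod 2) (IASmat (interMat w)) S) ∧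
    (∀ (F : Type) [Field F],
      ∃ (k : ℕ) (P : Matrix (Fin k) (V × Fin 3) F),
        P.rank = Fintype.card V ∧
        ∀ S : Set (V × Fin 3), Subtransversal3 S →
          colSpanRank F P S = colSpanRank (ZMod 2) (IASmat (interMat w)) S) := by
  refine ⟨hw.IASword_map_intCast_zmod_two, fun F _ S hS => hw.colSpanRank_IASword_eq F hS,
    fun F _ => ⟨Fintype.card V, ((IASword w).map (Int.cast : ℤ → F)).submatrix
      (Fintype.equivFin V).symm id, ?_, fun S hS => ?_⟩⟩
  · exact (Matrix.rank_submatrix _ (Fintype.equivFin V).symm (Equiv.refl _)).trans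
      (rank_IASword_map_intCast F w)
  · rw [colSpanRank_submatrix_rows, hw.colSpanRank_IASword_eq F hS]
end
end

section
/- Let F be a field, G a looped simple graph such that Z₃(G) is representable (respectively, strictly representable) over F, and H a vertex-minor of G. Then Z₃(H) is representable (respectively, strictly representable) over F. -/
open Matrix

noncomputable section

/-- The isotropic 3-matroid `Z₃(G)` is representable over `F`: some matrix over `F`
with columns indexed by `W(G)` has the same rank as `IAS(G)` on every subtransversal. -/
def Z3Rep (F : Type*) [Field F] {V : Type*} [Fintype V] [DecidableEq V]
    (A : Matrix V V (ZMod 2)) : Prop :=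
  ∃ (k : ℕ) (P : Matrix (Fin k) (V × Fin 3) F),
    ∀ S : Set (V × Fin 3), Subtransversal3 S →
      colSpanRank F P S = colSpanRank (ZMod 2) (IASmat A) S

/-- `Z₃(G)` is strictly representable over `F`: the sheltering matroid has rank `|V(G)|`. -/
def Z3RepStrict (F : Type*) [Field F] {V : Type*} [Fintype V] [DecidableEq V]
    (A : Matrix V V (ZMod 2)) : Prop :=
  ∃ (k : ℕ) (P : Matrix (Fin k) (V × Fin 3) F),
    P.rank = Fintype.card V ∧
    ∀ S : Set (V × Fin 3), Subtransversal3 S →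
      colSpanRank F P S = colSpanRank (ZMod 2) (IASmat A) S

/-- Complement the loop status of `v`. -/
def loopComp {V : Type*} [DecidableEq V] (A : Matrix V V (ZMod 2)) (v : V) :
    Matrix V V (ZMod 2) :=
  Matrix.of fun i j => if i = v ∧ j = v then A i j + 1 else A i j

/-- Simple local complement at `v`: complement the adjacency status of every pair of
distinct neighbors of `v`. -/
def simpleLC {V : Type*} [DecidableEq V] (A : Matrix V V (ZMod 2)) (v : V) :
    Matrix V V (ZMod 2) :=
  Matrix.of fun i j =>
    if i ≠ j ∧ i ≠ v ∧ j ≠ v ∧ A i v = 1 ∧ A j v = 1 then A i j + 1 else A i j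

/-- Non-simple local complement at `v`: additionally complement the loop status of
every neighbor of `v`. -/
def nonsimpleLC {V : Type*} [DecidableEq V] (A : Matrix V V (ZMod 2)) (v : V) :
    Matrix V V (ZMod 2) :=
  Matrix.of fun i j =>
    if i ≠ v ∧ j ≠ v ∧ A i v = 1 ∧ A j v = 1 then A i j + 1 else A i j

/-- One elementary step of local equivalence. -/
def LocStep {V : Type*} [DecidableEq V] (A B : Matrix V V (ZMod 2)) : Prop :=
  ∃ v, B = loopComp A v ∨ B = simpleLC A v ∨ B = nonsimpleLC A v

/-- Local equivalence: the equivalence relation generated by loop complementations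
and (simple and non-simple) local complementations. -/
def LocEquiv {V : Type*} [DecidableEq V] :
    Matrix V V (ZMod 2) → Matrix V V (ZMod 2) → Prop :=
  Relation.EqvGen LocStep


/-- `H` (on vertex type `V'`) is a vertex-minor of `G` (on `V`): `H` is an induced
subgraph of a graph locally equivalent to `G`. -/
def VertexMinor {V V' : Type*} [DecidableEq V] [DecidableEq V']
    (B : Matrix V' V' (ZMod 2)) (A : Matrix V V (ZMod 2)) : Prop :=
  ∃ A' : Matrix V V (ZMod 2), LocEquiv A A' ∧
    ∃ f : V' ↪ V, ∀ u u' : V', B u u' = A' (f u) (f u')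

/-!
Local equivalence permutes the columns of `IAS(G)` inside each vertex triple, up to row operations,
so it acts on sheltering matrices by relabelling columns. If `H` is induced on `U ⊆ V(G)`, then
`IAS(H)` represents the contraction of `M[IAS(G)]` by `Φ = {φ_G(w) | w ∉ U}`. As `S ∪ Φ` is a
subtransversal of `W(G)` for each subtransversal `S` of `W(H)`, contracting `Φ` in a matroid that
shelters `Z₃(G)` gives one that shelters `Z₃(H)`, and its rank drops by `|Φ| = |V(G)| - |V(H)|`.
-/

section ColumnRank

variable {F : Type*} [Field F] {m m' n n' : Type*} {M : Matrix m n F} {Φ : Set n}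

theorem colSpanRank_eq_finrank_span_col (M : Matrix m n F) (S : Set n) :
    colSpanRank F M S = Module.finrank F (Submodule.span F (M.col '' S)) :=
  rfl

theorem colSpanRank_eq_image_of_col_eq (e : (m → F) ≃ₗ[F] (m' → F)) {M' : Matrix m' n' F}
    {h : n' → n} (hcol : ∀ j, M'.col j = e (M.col (h j))) (S : Set n') :
    colSpanRank F M' S = colSpanRank F M (h '' S) := by
  have himage : M'.col '' S = e '' (M.col '' (h '' S)) := by
    simp only [Set.image_image, hcol]
  rw [colSpanRank_eq_finrank_span_col, himage, ← LinearEquiv.coe_coe, ← Submodule.map_span,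
    LinearEquiv.finrank_map_eq, colSpanRank_eq_finrank_span_col]

theorem colSpanRank_submatrix (M : Matrix m n F) (h : n' → n) (S : Set n') :
    colSpanRank F (M.submatrix id h) S = colSpanRank F M (h '' S) :=
  colSpanRank_eq_image_of_col_eq (.refl F _) (fun _ => rfl) S

theorem colSpanRank_univ [Fintype n] (M : Matrix m n F) :
    colSpanRank F M Set.univ = M.rank := by
  rw [M.rank_eq_finrank_span_cols, colSpanRank_eq_finrank_span_col, Set.image_univ]

theorem colSpanRank_le_rank [Finite m] [Fintype n] (M : Matrix m n F) (S : Set n) :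
    colSpanRank F M S ≤ M.rank := by
  rw [← colSpanRank_univ]
  exact Submodule.finrank_mono (Submodule.span_mono (Set.image_mono S.subset_univ))

theorem colSpanRank_add_of_ker_eq [Finite m] {M' : Matrix m' n F}
    (g : (m → F) →ₗ[F] (m' → F)) (hcol : ∀ j, M'.col j = g (M.col j))
    (hker : LinearMap.ker g = Submodule.span F (M.col '' Φ)) (S : Set n) :
    colSpanRank F M' S + colSpanRank F M Φ = colSpanRank F M (S ∪ Φ) := by
  simp only [colSpanRank_eq_finrank_span_col]
  set W := Submodule.span F (M.col '' (S ∪ Φ)) with hW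
  have hle : LinearMap.ker g ≤ W :=
    hker ▸ Submodule.span_mono (Set.image_mono Set.subset_union_right)
  have hmap : Submodule.span F (M'.col '' S) = W.map g := by
    have hcol' : M'.col = g ∘ M.col := funext hcol
    rw [hW, Set.image_union, Submodule.span_union, ← hker, Submodule.map_sup,
      g.le_ker_iff_map.1 le_rfl, sup_bot_eq, Submodule.map_span, hcol', Set.image_comp]
  have hrank := (g.domRestrict W).finrank_range_add_finrank_ker
  rwa [LinearMap.range_domRestrict, LinearMap.ker_domRestrict,
    (Submodule.comapSubtypeEquivOfLe hle).finrank_eq, ← hmap, hker] at hrank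

theorem exists_colSpanRank_add_eq_union [Finite m] (M : Matrix m n F) (Φ : Set n) :
    ∃ (k : ℕ) (M' : Matrix (Fin k) n F), ∀ S,
      colSpanRank F M' S + colSpanRank F M Φ = colSpanRank F M (S ∪ Φ) := by
  let Q := Submodule.span F (M.col '' Φ)
  let g := (Module.finBasis F ((m → F) ⧸ Q)).equivFun.toLinearMap ∘ₗ Q.mkQ
  refine ⟨_, (of fun j => g (M.col j))ᵀ, colSpanRank_add_of_ker_eq g (fun _ => rfl) ?_⟩
  rw [LinearEquiv.ker_comp, Submodule.ker_mkQ]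

end ColumnRank

section Subtransversal

variable {V V' : Type*}

theorem subtransversal3_iff_injOn_fst {S : Set (V × Fin 3)} :
    Subtransversal3 S ↔ S.InjOn Prod.fst := by
  constructor
  · rintro hS ⟨v, i⟩ hi ⟨w, j⟩ hj rfl
    rw [hS v i j hi hj]
  · intro hS v i j hi hj
    exact congrArg Prod.snd (hS hi hj rfl)

theorem subtransversal3_prod_singleton (T : Set V) (c : Fin 3) : Subtransversal3 (T ×ˢ {c}) :=
  fun _ _ _ hi hj => hi.2.trans hj.2.symm

theorem Subtransversal3.image {S : Set (V × Fin 3)} (hS : Subtransversal3 S)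
    {h : V × Fin 3 → V' × Fin 3} {f : V → V'} (hf : f.Injective) (hh : ∀ p, (h p).1 = f p.1) :
    Subtransversal3 (h '' S) := by
  rw [subtransversal3_iff_injOn_fst] at hS ⊢
  refine Set.InjOn.image_of_comp fun p hp q hq hpq => hS hp hq (hf ?_)
  simpa only [Function.comp_apply, hh] using hpq

theorem Subtransversal3.union {S T : Set (V × Fin 3)} (hS : Subtransversal3 S)
    (hT : Subtransversal3 T) (hST : ∀ p ∈ S, ∀ q ∈ T, p.1 ≠ q.1) : Subtransversal3 (S ∪ T) := by
  rintro v i j (hi | hi) (hj | hj)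
  · exact hS v i j hi hj
  · exact absurd rfl (hST (v, i) hi (v, j) hj)
  · exact absurd rfl (hST (v, j) hj (v, i) hi)
  · exact hT v i j hi hj

end Subtransversal

section IAS

variable {V V' : Type*} [DecidableEq V] [DecidableEq V'] (A : Matrix V V (ZMod 2))

theorem col_IASmat_phi (w : V) : (IASmat A).col (w, 0) = Pi.single w 1 := by
  ext i
  simp [IASmat, Pi.single_apply]

theorem col_IASmat_chi (w : V) : (IASmat A).col (w, 1) = A.col w := by
  ext i
  simp [IASmat]

theorem col_IASmat_psi (w : V) : (IASmat A).col (w, 2) = Pi.single w 1 + A.col w := by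
  ext i
  simp [IASmat, Pi.single_apply]

theorem IASmat_submatrix {f : V' → V} (hf : f.Injective) :
    IASmat (A.submatrix f f) = (IASmat A).submatrix f (Prod.map f id) := by
  ext i p
  simp [IASmat, hf.eq_iff]

theorem span_col_IASmat_phi [Finite V] (T : Set V) :
    Submodule.span (ZMod 2) ((IASmat A).col '' (T ×ˢ {0})) = Pi.spanSubset (ZMod 2) T := by
  rw [Pi.spanSubset, Set.prod_singleton, Set.image_image]
  simp only [col_IASmat_phi, Pi.basisFun_apply]

theorem colSpanRank_IASmat_phi [Finite V] (T : Set V) :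
    colSpanRank (ZMod 2) (IASmat A) (T ×ˢ {0}) = T.ncard := by
  rw [colSpanRank_eq_finrank_span_col, span_col_IASmat_phi, Pi.dim_spanSubset]

theorem colSpanRank_IASmat_submatrix_add [Finite V] {f : V' → V} (hf : f.Injective)
    (S : Set (V' × Fin 3)) :
    colSpanRank (ZMod 2) (IASmat (A.submatrix f f)) S +
        colSpanRank (ZMod 2) (IASmat A) ((Set.range f)ᶜ ×ˢ {0}) =
      colSpanRank (ZMod 2) (IASmat A) (Prod.map f id '' S ∪ (Set.range f)ᶜ ×ˢ {0}) := by
  have hker : LinearMap.ker (LinearMap.funLeft (ZMod 2) (ZMod 2) f) =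
      Submodule.span (ZMod 2) ((IASmat A).col '' ((Set.range f)ᶜ ×ˢ {0})) := by
    ext x
    simp [span_col_IASmat_phi, Pi.mem_spanSubset_iff, funext_iff, LinearMap.funLeft_apply]
  rw [IASmat_submatrix A hf, ← colSpanRank_add_of_ker_eq (M' := (IASmat A).submatrix f id) _
    (fun _ => rfl) hker, ← colSpanRank_submatrix, submatrix_submatrix]
  rfl

end IAS

section CompatibleIso

variable {V : Type*} [DecidableEq V] {A B C : Matrix V V (ZMod 2)}

/-- The isotropic matroids of two graphs on `V` are isomorphic by a map that preserves each vertex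
triple `{φ(v), χ(v), ψ(v)}`; the compatible isomorphisms of isotropic matroids, restricted to those
that act trivially on `V`. -/
def CompatibleIso (A B : Matrix V V (ZMod 2)) : Prop :=
  ∃ σ : Equiv.Perm (V × Fin 3), (∀ p, (σ p).1 = p.1) ∧
    ∀ S, colSpanRank (ZMod 2) (IASmat B) S = colSpanRank (ZMod 2) (IASmat A) (σ '' S)

theorem CompatibleIso.refl (A : Matrix V V (ZMod 2)) : CompatibleIso A A :=
  ⟨1, fun _ => rfl, fun S => by rw [Equiv.Perm.coe_one, Set.image_id]⟩

theorem CompatibleIso.symm (h : CompatibleIso A B) : CompatibleIso B A := by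
  obtain ⟨σ, hfst, hrank⟩ := h
  refine ⟨σ.symm, fun p => ?_, fun S => ?_⟩
  · rw [← hfst, σ.apply_symm_apply]
  · rw [hrank, σ.image_symm_eq_preimage, σ.image_preimage]

theorem CompatibleIso.trans (hAB : CompatibleIso A B) (hBC : CompatibleIso B C) :
    CompatibleIso A C := by
  obtain ⟨σ, hσ, hrankσ⟩ := hAB
  obtain ⟨τ, hτ, hrankτ⟩ := hBC
  refine ⟨τ.trans σ, fun p => ?_, fun S => ?_⟩
  · rw [Equiv.trans_apply, hσ, hτ]
  · rw [hrankτ, hrankσ, Set.image_image, Equiv.coe_trans, Function.comp_def]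

theorem compatibleIso_of_col_eq (e : (V → ZMod 2) ≃ₗ[ZMod 2] (V → ZMod 2))
    (h : ∀ w, ∃ σ : Equiv.Perm (Fin 3), ∀ c,
      (IASmat B).col (w, c) = e ((IASmat A).col (w, σ c))) : CompatibleIso A B := by
  choose σ hσ using h
  exact ⟨Equiv.prodCongrRight σ, fun _ => rfl, colSpanRank_eq_image_of_col_eq e fun p => hσ p.1 p.2⟩

theorem zmod_two_eq_zero_or_eq_one : ∀ a : ZMod 2, a = 0 ∨ a = 1 := by
  decide

theorem compatibleIso_add_diagonal (A : Matrix V V (ZMod 2)) (d : V → ZMod 2) :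
    CompatibleIso A (A + diagonal d) := by
  have hcol (w : V) : (A + diagonal d).col w = A.col w + Pi.single w (d w) := by
    rw [← col_diagonal]
    rfl
  refine compatibleIso_of_col_eq (.refl _ _) fun w => ?_
  rcases zmod_two_eq_zero_or_eq_one (d w) with hd | hd
  · refine ⟨1, fun | 0 => ?_ | 1 => ?_ | 2 => ?_⟩ <;>
      simp [col_IASmat_phi, col_IASmat_chi, col_IASmat_psi, hcol, hd]
  · have hσ : Equiv.swap (1 : Fin 3) 2 0 = 0 := by decide
    refine ⟨Equiv.swap 1 2, fun | 0 => ?_ | 1 => ?_ | 2 => ?_⟩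
    · simp [col_IASmat_phi, hσ]
    · simp [col_IASmat_chi, col_IASmat_psi, hcol, hd, add_comm]
    · simp [col_IASmat_chi, col_IASmat_psi, hcol, hd, add_left_comm, ZModModule.add_self]

/-- The indicator vector of the open neighborhood of `v`; a loop at `v` is disregarded. -/
def openNeighborVec (A : Matrix V V (ZMod 2)) (v : V) : V → ZMod 2 :=
  Function.update (A.col v) v 0

theorem loopComp_eq_add_diagonal (A : Matrix V V (ZMod 2)) (v : V) :
    loopComp A v = A + diagonal (Pi.single v 1) := by
  ext i j
  simp only [loopComp, of_apply, Matrix.add_apply, diagonal_apply, Pi.single_apply]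
  grind

theorem nonsimpleLC_eq_add_vecMulVec (A : Matrix V V (ZMod 2)) (v : V) :
    nonsimpleLC A v = A + vecMulVec (openNeighborVec A v) (openNeighborVec A v) := by
  have hmul : ∀ a b : ZMod 2, a * b = if a = 1 ∧ b = 1 then 1 else 0 := by decide
  ext i j
  simp only [nonsimpleLC, of_apply, Matrix.add_apply, vecMulVec_apply, hmul, openNeighborVec,
    Function.update_apply, col_apply]
  grind

theorem simpleLC_eq_nonsimpleLC_add_diagonal (A : Matrix V V (ZMod 2)) (v : V) :
    simpleLC A v = nonsimpleLC A v + diagonal (openNeighborVec A v) := by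
  ext i j
  simp only [simpleLC, nonsimpleLC, of_apply, Matrix.add_apply, diagonal_apply, openNeighborVec,
    Function.update_apply, col_apply]
  grind [zmod_two_eq_zero_or_eq_one (A i v)]

theorem col_eq_openNeighborVec_add_single (A : Matrix V V (ZMod 2)) (v : V) :
    A.col v = openNeighborVec A v + Pi.single v (A v v) := by
  ext i
  by_cases hi : i = v
  · subst hi
    simp [openNeighborVec]
  · simp [openNeighborVec, hi]

theorem col_nonsimpleLC (A : Matrix V V (ZMod 2)) (v w : V) :
    (nonsimpleLC A v).col w = A.col w + openNeighborVec A v w • openNeighborVec A v := by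
  rw [nonsimpleLC_eq_add_vecMulVec]
  ext i
  simp [vecMulVec_apply, mul_comm]

theorem compatibleIso_nonsimpleLC (hA : A.IsSymm) (v : V) :
    CompatibleIso A (nonsimpleLC A v) := by
  set n := openNeighborVec A v
  have hnv : n v = 0 := Function.update_self ..
  let e := LinearEquiv.transvection (f := LinearMap.proj v) (v := n) hnv
  have he (x : V → ZMod 2) : e x = x + x v • n := rfl
  have hcol (w : V) : (nonsimpleLC A v).col w = A.col w + n w • n := col_nonsimpleLC A v w
  refine compatibleIso_of_col_eq e fun w => ?_
  by_cases hw : w = v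
  · subst hw
    have hAw : A.col w = n + Pi.single w (A w w) := col_eq_openNeighborVec_add_single A w
    rcases zmod_two_eq_zero_or_eq_one (A w w) with hd | hd <;> rw [hd] at hAw
    · have hσ : Equiv.swap (0 : Fin 3) 2 1 = 1 := by decide
      refine ⟨Equiv.swap 0 2, fun | 0 => ?_ | 1 => ?_ | 2 => ?_⟩ <;>
        simp [col_IASmat_phi, col_IASmat_chi, col_IASmat_psi, he, hcol, hAw, hnv, hσ, add_assoc,
          ZModModule.add_self]
    · have hσ : Equiv.swap (0 : Fin 3) 1 2 = 2 := by decide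
      refine ⟨Equiv.swap 0 1, fun | 0 => ?_ | 1 => ?_ | 2 => ?_⟩ <;>
        simp [col_IASmat_phi, col_IASmat_chi, col_IASmat_psi, he, hcol, hAw, hnv, hσ,
          add_comm _ n, ← add_assoc, ZModModule.add_self]
  · have hnw : n w = A v w := by
      rw [← hA.apply, ← col_apply A]
      exact Function.update_of_ne hw ..
    refine ⟨1, fun | 0 => ?_ | 1 => ?_ | 2 => ?_⟩ <;>
      simp [col_IASmat_phi, col_IASmat_chi, col_IASmat_psi, he, hcol, hnw, Ne.symm hw, add_assoc]

end CompatibleIso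

section LocalEquivalence

variable {V : Type*} [DecidableEq V] {A B : Matrix V V (ZMod 2)}

theorem LocStep.isSymm_sub (h : LocStep A B) : (B - A).IsSymm := by
  obtain ⟨v, rfl | rfl | rfl⟩ := h
  · rw [loopComp_eq_add_diagonal, add_sub_cancel_left]
    exact isSymm_diagonal _
  · rw [simpleLC_eq_nonsimpleLC_add_diagonal, nonsimpleLC_eq_add_vecMulVec, add_assoc,
      add_sub_cancel_left]
    exact IsSymm.add (transpose_vecMulVec _ _) (isSymm_diagonal _)
  · rw [nonsimpleLC_eq_add_vecMulVec, add_sub_cancel_left]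
    exact transpose_vecMulVec _ _

theorem LocEquiv.isSymm_sub (h : LocEquiv A B) : (B - A).IsSymm := by
  induction h with
  | rel A B h => exact h.isSymm_sub
  | refl A => simp
  | symm A B _ ih => simpa using ih.neg
  | trans A B C _ _ ihAB ihBC => simpa using ihBC.add ihAB

theorem LocEquiv.isSymm_iff (h : LocEquiv A B) : A.IsSymm ↔ B.IsSymm :=
  ⟨fun hA => by simpa using hA.add h.isSymm_sub, fun hB => by simpa using hB.sub h.isSymm_sub⟩

theorem LocStep.compatibleIso (hA : A.IsSymm) (h : LocStep A B) : CompatibleIso A B := by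
  obtain ⟨v, rfl | rfl | rfl⟩ := h
  · rw [loopComp_eq_add_diagonal]
    exact compatibleIso_add_diagonal A _
  · rw [simpleLC_eq_nonsimpleLC_add_diagonal]
    exact (compatibleIso_nonsimpleLC hA v).trans (compatibleIso_add_diagonal _ _)
  · exact compatibleIso_nonsimpleLC hA v

theorem LocEquiv.compatibleIso (hA : A.IsSymm) (h : LocEquiv A B) : CompatibleIso A B := by
  induction h with
  | rel A B h => exact h.compatibleIso hA
  | refl A => exact .refl A
  | symm A B h ih => exact (ih ((LocEquiv.isSymm_iff h).2 hA)).symm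
  | trans A B C h _ ihAB ihBC => exact (ihAB hA).trans (ihBC ((LocEquiv.isSymm_iff h).1 hA))

end LocalEquivalence

section Shelters

variable {F : Type*} [Field F] {m V V' : Type*} [DecidableEq V] [DecidableEq V']
  {P : Matrix m (V × Fin 3) F} {A B : Matrix V V (ZMod 2)}

/-- The matroid represented by `P` shelters the isotropic 3-matroid `Z₃(G)` of the graph with
adjacency matrix `A`. -/
def Shelters (P : Matrix m (V × Fin 3) F) (A : Matrix V V (ZMod 2)) : Prop :=
  ∀ S, Subtransversal3 S → colSpanRank F P S = colSpanRank (ZMod 2) (IASmat A) S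

theorem Shelters.colSpanRank_phi [Finite V] (hP : Shelters P A) (T : Set V) :
    colSpanRank F P (T ×ˢ {0}) = T.ncard := by
  rw [hP _ (subtransversal3_prod_singleton T 0), colSpanRank_IASmat_phi]

theorem Shelters.card_le_rank [Finite m] [Fintype V] (hP : Shelters P A) :
    Fintype.card V ≤ P.rank := by
  rw [← Nat.card_eq_fintype_card, ← Set.ncard_univ, ← hP.colSpanRank_phi]
  exact colSpanRank_le_rank P _

theorem Shelters.exists_of_compatibleIso [Fintype V] (hP : Shelters P A)
    (hAB : CompatibleIso A B) :
    ∃ P' : Matrix m (V × Fin 3) F, Shelters P' B ∧ P'.rank = P.rank := by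
  obtain ⟨σ, hfst, hrank⟩ := hAB
  refine ⟨P.submatrix id σ, fun S hS => ?_, P.rank_submatrix (.refl m) σ⟩
  rw [colSpanRank_submatrix, hrank, hP _ (hS.image Function.injective_id hfst)]

theorem Shelters.exists_submatrix [Finite m] [Fintype V] [Fintype V'] (hP : Shelters P A)
    {f : V' → V} (hf : f.Injective) :
    ∃ (k : ℕ) (P' : Matrix (Fin k) (V' × Fin 3) F), Shelters P' (A.submatrix f f) ∧
      P'.rank + Fintype.card V ≤ P.rank + Fintype.card V' := by
  set Φ : Set (V × Fin 3) := (Set.range f)ᶜ ×ˢ {0}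
  obtain ⟨k, Q, hQ⟩ := exists_colSpanRank_add_eq_union P Φ
  refine ⟨k, Q.submatrix id (Prod.map f id), fun S hS => ?_, ?_⟩
  · have hΦsub : Subtransversal3 Φ := subtransversal3_prod_singleton _ 0
    have hunion : Subtransversal3 (Prod.map f id '' S ∪ Φ) := by
      refine (hS.image hf fun _ => rfl).union hΦsub ?_
      rintro _ ⟨p, -, rfl⟩ q hq hpq
      exact hq.1 ⟨p.1, hpq⟩
    have hF := hQ (Prod.map f id '' S)
    rw [hP _ hunion, hP _ hΦsub, ← colSpanRank_IASmat_submatrix_add A hf] at hF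
    rw [colSpanRank_submatrix]
    exact Nat.add_right_cancel hF
  · have hcard : (Set.range f)ᶜ.ncard + Fintype.card V' = Fintype.card V := by
      rw [← Nat.card_eq_fintype_card, ← Nat.card_eq_fintype_card, ← Set.ncard_range_of_injective hf,
        add_comm, Set.ncard_add_ncard_compl]
    have hle := colSpanRank_le_rank P (Prod.map f id '' Set.univ ∪ Φ)
    rw [← hQ, hP.colSpanRank_phi, ← colSpanRank_submatrix, colSpanRank_univ] at hle
    omega

theorem Shelters.exists_of_vertexMinor [Finite m] [Fintype V] [Fintype V'] (hP : Shelters P A)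
    (hA : A.IsSymm) {B : Matrix V' V' (ZMod 2)} (h : VertexMinor B A) :
    ∃ (k : ℕ) (P' : Matrix (Fin k) (V' × Fin 3) F), Shelters P' B ∧
      P'.rank + Fintype.card V ≤ P.rank + Fintype.card V' := by
  obtain ⟨A', hAA', f, hf⟩ := h
  obtain rfl : B = A'.submatrix f f := Matrix.ext hf
  obtain ⟨P₁, hP₁, hrank⟩ := hP.exists_of_compatibleIso (hAA'.compatibleIso hA)
  exact hrank ▸ hP₁.exists_submatrix f.injective

end Shelters

/-- If `Z₃(G)` is (strictly) representable over `F` and `H` is a vertex-minor of `G`,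
then `Z₃(H)` is (strictly) representable over `F`. -/
theorem Z3_representable_vertex_minor
    {V V' : Type} [Fintype V] [DecidableEq V] [Fintype V'] [DecidableEq V']
    (A : Matrix V V (ZMod 2)) (B : Matrix V' V' (ZMod 2))
    (hA : A.IsSymm) (hB : B.IsSymm)
    (F : Type) [Field F] (hminor : VertexMinor B A) :
    (Z3Rep F A → Z3Rep F B) ∧ (Z3RepStrict F A → Z3RepStrict F B) := by
  constructor
  · rintro ⟨_, P, hP : Shelters P A⟩
    obtain ⟨k, P', hP', -⟩ := hP.exists_of_vertexMinor hA hminor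
    exact ⟨k, P', hP'⟩
  · rintro ⟨_, P, hrank, hP : Shelters P A⟩
    obtain ⟨k, P', hP', hrank'⟩ := hP.exists_of_vertexMinor hA hminor
    have hle : P'.rank ≤ Fintype.card V' := by omega
    exact ⟨k, P', hle.antisymm hP'.card_le_rank, hP'⟩
end
end
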